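/- Let G = (V,E) be a finite graph with strictly positive edge weights x, cluster weight q ≥ 1, and E' ⊆ E; for s > 0 let P^s be the random-cluster measure with weights s on E' and x off E'. Then for every nonempty increasing event A ⊆ {0,1}^E, the function s ↦ log P^s(A) is differentiable on (0, ∞) and for every s > 0: (d/ds) log P^s(A) ≥ (1/(s(1+s))) Σ_{e ∈ E'} P^s(e ∈ Piv_A | A). -/

import Mathlib

noncomputable section
open scoped Classical BigOperators

namespace RandomCluster

variable {V : Type*} [Fintype V] [DecidableEq V]

/-- A percolation configuration on the edge set `E`. -/
def Config (E : Finset (Sym2 V)) : Type _ := {e : Sym2 V // e ∈ E} → Bool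

instance (E : Finset (Sym2 V)) : Fintype (Config E) := by unfold Config; infer_instance

/-- The set of open edges of a configuration. -/
def openEdges {E : Finset (Sym2 V)} (ω : Config E) : Set (Sym2 V) :=
  {e | ∃ h : e ∈ E, ω ⟨e, h⟩ = true}

/-- `κ(ω)`: the number of connected components of the spanning subgraph of open edges
(isolated vertices included). -/
def kappa {E : Finset (Sym2 V)} (ω : Config E) : ℕ :=
  Nat.card (SimpleGraph.fromEdgeSet (openEdges ω)).ConnectedComponent

/-- The (unnormalized) random-cluster weight. -/
def weight (E : Finset (Sym2 V)) (x : Sym2 V → ℝ) (q : ℝ) (ω : Config E) : ℝ :=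
  q ^ kappa ω * ∏ e : {e : Sym2 V // e ∈ E}, (if ω e then x e.1 else 1)

/-- The partition function. -/
def Z (E : Finset (Sym2 V)) (x : Sym2 V → ℝ) (q : ℝ) : ℝ :=
  ∑ ω : Config E, weight E x q ω

/-- The random-cluster probability measure. -/
def prob (E : Finset (Sym2 V)) (x : Sym2 V → ℝ) (q : ℝ) (ω : Config E) : ℝ :=
  weight E x q ω / Z E x q

/-- The random-cluster measure conditioned on `{ω : ω e = i}`. -/
def condProb (E : Finset (Sym2 V)) (x : Sym2 V → ℝ) (q : ℝ) (e : {e : Sym2 V // e ∈ E})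
    (i : Bool) (ω : Config E) : ℝ :=
  if ω e = i then prob E x q ω / (∑ η : Config E, if η e = i then prob E x q η else 0) else 0

end RandomCluster


namespace RandomCluster

variable {V : Type*} [Fintype V] [DecidableEq V]

/-- The weights modified to equal `s` on every edge of `E'`. -/
def modWeights (E' : Finset (Sym2 V)) (x : Sym2 V → ℝ) (s : ℝ) : Sym2 V → ℝ :=
  fun e => if e ∈ E' then s else x e

/-- An event is increasing if it is stable under opening more edges. -/
def Increasing {E : Finset (Sym2 V)} (A : Set (Config E)) : Prop :=
  ∀ ω ω' : Config E, (∀ f, ω f ≤ ω' f) → ω ∈ A → ω' ∈ A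

/-- The edge `e` is pivotal for `A` in `ω`: exactly one of the two configurations agreeing
with `ω` off `e` lies in `A`. -/
def Pivotal {E : Finset (Sym2 V)} (A : Set (Config E)) (e : {e : Sym2 V // e ∈ E})
    (ω : Config E) : Prop :=
  Xor' (Function.update ω e true ∈ A) (Function.update ω e false ∈ A)

/-- `P^s(A)` for the measure with weights `s` on `E'` and `x` elsewhere. -/
def probOf (E E' : Finset (Sym2 V)) (x : Sym2 V → ℝ) (q s : ℝ) (A : Set (Config E)) : ℝ :=
  ∑ ω : Config E, (if ω ∈ A then prob E (modWeights E' x s) q ω else 0)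

/-- `P^s(e ∈ Piv_A | A)`. -/
def condPiv (E E' : Finset (Sym2 V)) (x : Sym2 V → ℝ) (q s : ℝ) (A : Set (Config E))
    (e : {e : Sym2 V // e ∈ E}) : ℝ :=
  (∑ ω : Config E, (if ω ∈ A ∧ Pivotal A e ω then prob E (modWeights E' x s) q ω else 0)) /
    probOf E E' x q s A

end RandomCluster


namespace RandomCluster

/-- Functions constant along open edges. -/
def flatSpace {V : Type*} (G : SimpleGraph V) : Submodule ℝ (V → ℝ) where
  carrier := {f | ∀ u v, G.Adj u v → f u = f v}
  add_mem' := by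
    intro a b ha hb u v h
    simp [ha u v h, hb u v h]
  zero_mem' := by
    intro u v h
    rfl
  smul_mem' := by
    intro c a ha u v h
    simp [ha u v h]

/-- The flat functions are the functions on connected components. -/
def flatEquiv {V : Type*} (G : SimpleGraph V) :
    (G.ConnectedComponent → ℝ) ≃ₗ[ℝ] flatSpace G where
  toFun g := ⟨fun v => g (G.connectedComponentMk v), by
    intro u v h
    exact congrArg g (SimpleGraph.ConnectedComponent.sound h.reachable)⟩
  map_add' a b := rfl
  map_smul' a b := rfl
  invFun f := fun c => c.lift f.1 (by
    intro v w p _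
    induction p with
    | nil => rfl
    | cons h p ih => exact (f.2 _ _ h).trans (ih (by
      rename_i hp
      exact hp.of_cons)))
  left_inv g := by
    funext c
    induction c using SimpleGraph.ConnectedComponent.ind
    rfl
  right_inv f := by
    ext v
    rfl

theorem finrank_flat {V : Type*} [Fintype V] (G : SimpleGraph V) :
    Module.finrank ℝ (flatSpace G) = Nat.card G.ConnectedComponent := by
  rw [← (flatEquiv G).finrank_eq, Module.finrank_fintype_fun_eq_card, Nat.card_eq_fintype_card]

theorem flat_anti {V : Type*} {G H : SimpleGraph V} (h : G ≤ H) : flatSpace H ≤ flatSpace G :=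
  fun _ hf u v huv => hf u v (h huv)

theorem card_anti {V : Type*} [Fintype V] {G H : SimpleGraph V} (h : G ≤ H) :
    Nat.card H.ConnectedComponent ≤ Nat.card G.ConnectedComponent := by
  rw [← finrank_flat, ← finrank_flat]
  exact Submodule.finrank_mono (flat_anti h)

theorem card_supermod {V : Type*} [Fintype V] (G H : SimpleGraph V) :
    Nat.card G.ConnectedComponent + Nat.card H.ConnectedComponent ≤
      Nat.card (G ⊔ H).ConnectedComponent + Nat.card (G ⊓ H).ConnectedComponent := by
  simp only [← finrank_flat]
  rw [← Submodule.finrank_sup_add_finrank_inf_eq (flatSpace G) (flatSpace H), add_comm]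
  apply add_le_add
  · apply Submodule.finrank_mono
    rintro f ⟨hf, hg⟩ u v (h | h)
    · exact hf u v h
    · exact hg u v h
  · exact Submodule.finrank_mono (sup_le (flat_anti inf_le_left) (flat_anti inf_le_right))

section
variable {V : Type*} [Fintype V] [DecidableEq V] {E : Finset (Sym2 V)}

set_option linter.unusedSectionVars false

instance : DistribLattice (Config E) :=
  inferInstanceAs (DistribLattice ({e : Sym2 V // e ∈ E} → Bool))

theorem config_le {a b : Config E} : a ≤ b ↔ ∀ f, a f ≤ b f := Iff.rfl

theorem graph_mono {a b : Config E} (h : a ≤ b) :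
    SimpleGraph.fromEdgeSet (openEdges a) ≤ SimpleGraph.fromEdgeSet (openEdges b) := by
  apply SimpleGraph.fromEdgeSet_mono
  rintro e ⟨he, h1⟩
  refine ⟨he, ?_⟩
  have := h ⟨e, he⟩
  rw [h1] at this
  exact top_le_iff.1 this

theorem kappa_anti {a b : Config E} (h : a ≤ b) : kappa b ≤ kappa a := card_anti (graph_mono h)

theorem kappa_supermod (a b : Config E) :
    kappa a + kappa b ≤ kappa (a ⊓ b) + kappa (a ⊔ b) := by
  have h := card_supermod (SimpleGraph.fromEdgeSet (openEdges a))
    (SimpleGraph.fromEdgeSet (openEdges b))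
  rw [← SimpleGraph.fromEdgeSet_union, ← SimpleGraph.fromEdgeSet_inter] at h
  have h1 : openEdges a ∪ openEdges b = openEdges (a ⊔ b) := by
    ext e
    have : ∀ he, (a ⊔ b) ⟨e, he⟩ = (a ⟨e, he⟩ || b ⟨e, he⟩) := fun _ => rfl
    simp only [openEdges, Set.mem_union, Set.mem_setOf_eq, this, Bool.or_eq_true, exists_or]
  have h2 : openEdges a ∩ openEdges b = openEdges (a ⊓ b) := by
    ext e
    have : ∀ he, (a ⊓ b) ⟨e, he⟩ = (a ⟨e, he⟩ && b ⟨e, he⟩) := fun _ => rfl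
    simp only [openEdges, Set.mem_inter_iff, Set.mem_setOf_eq, this, Bool.and_eq_true]
    constructor
    · rintro ⟨⟨h, h1⟩, _, h2⟩
      exact ⟨h, h1, h2⟩
    · rintro ⟨h, h1, h2⟩
      exact ⟨⟨h, h1⟩, h, h2⟩
  rw [h1, h2] at h
  unfold kappa
  omega

theorem weight_pos {y : Sym2 V → ℝ} (hy : ∀ e ∈ E, 0 < y e) {q : ℝ} (hq : 1 ≤ q)
    (a : Config E) : 0 < weight E y q a := by
  unfold weight
  apply mul_pos (pow_pos (by linarith) _)
  apply Finset.prod_pos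
  intro e _
  split_ifs
  · exact hy _ e.2
  · exact one_pos

theorem weight_supermod {y : Sym2 V → ℝ} (hy : ∀ e ∈ E, 0 < y e) {q : ℝ} (hq : 1 ≤ q)
    (a b : Config E) :
    weight E y q a * weight E y q b ≤ weight E y q (a ⊓ b) * weight E y q (a ⊔ b) := by
  unfold weight
  rw [mul_mul_mul_comm, mul_mul_mul_comm (q ^ kappa (a ⊓ b)), ← pow_add, ← pow_add,
    ← Finset.prod_mul_distrib, ← Finset.prod_mul_distrib]
  have hprod : (∏ e : {e : Sym2 V // e ∈ E}, (if a e then y e.1 else 1) * (if b e then y e.1 else 1))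
      = ∏ e : {e : Sym2 V // e ∈ E},
        (if (a ⊓ b) e then y e.1 else 1) * (if (a ⊔ b) e then y e.1 else 1) := by
    apply Finset.prod_congr rfl
    intro e _
    have h1 : (a ⊓ b) e = (a e && b e) := rfl
    have h2 : (a ⊔ b) e = (a e || b e) := rfl
    rw [h1, h2]
    cases a e <;> cases b e <;> simp
  rw [hprod]
  apply mul_le_mul_of_nonneg_right
  · exact pow_le_pow_right₀ hq (kappa_supermod a b)
  · apply Finset.prod_nonneg
    intro e _
    apply mul_nonneg <;> split_ifs <;> first | exact (hy _ e.2).le | exact zero_le_one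

/-- Resample one edge. -/
def upd (a : Config E) (e : {e : Sym2 V // e ∈ E}) (b : Bool) : Config E := Function.update a e b

/-- The edge `e` is open. -/
def Op (e : {e : Sym2 V // e ∈ E}) (a : Config E) : Prop := a e = true

theorem upd_self (a : Config E) (e : {e : Sym2 V // e ∈ E}) (b : Bool) : upd a e b e = b := by
  unfold upd Function.update
  exact dif_pos rfl

theorem upd_ne (a : Config E) {e f : {e : Sym2 V // e ∈ E}} (b : Bool) (h : f ≠ e) :
    upd a e b f = a f := by
  unfold upd Function.update
  exact dif_neg h

theorem upd_upd (a : Config E) (e : {e : Sym2 V // e ∈ E}) (b c : Bool) (h : a e = c) :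
    upd (upd a e b) e c = a := by
  funext f
  by_cases hf : f = e
  · subst hf; rw [upd_self, h]
  · rw [upd_ne _ _ hf, upd_ne _ _ hf]

theorem upd_eq (a : Config E) (e : {e : Sym2 V // e ∈ E}) (c : Bool) (h : a e = c) :
    upd a e c = a := by
  funext f
  by_cases hf : f = e
  · subst hf; rw [upd_self, h]
  · rw [upd_ne _ _ hf]

theorem upd_false_le (a : Config E) (e : {e : Sym2 V // e ∈ E}) : upd a e false ≤ a := by
  intro f
  by_cases hf : f = e
  · subst hf; rw [upd_self]; exact Bool.false_le _
  · rw [upd_ne _ _ hf]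

theorem le_upd_true (a : Config E) (e : {e : Sym2 V // e ∈ E}) : a ≤ upd a e true := by
  intro f
  by_cases hf : f = e
  · subst hf; rw [upd_self]; exact Bool.le_true _
  · rw [upd_ne _ _ hf]

theorem upd_mono {a b : Config E} (h : a ≤ b) (e : {e : Sym2 V // e ∈ E}) (c : Bool) :
    upd a e c ≤ upd b e c := by
  intro f
  by_cases hf : f = e
  · subst hf; rw [upd_self, upd_self]
  · rw [upd_ne _ _ hf, upd_ne _ _ hf]; exact h f

theorem pivotal_iff (A : Set (Config E)) (e : {e : Sym2 V // e ∈ E}) (ω : Config E) :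
    Pivotal A e ω ↔ (upd ω e true ∈ A ∧ upd ω e false ∉ A) ∨
      (upd ω e false ∈ A ∧ upd ω e true ∉ A) := Iff.rfl

/-- Closing an open edge of weight `y e` costs at most a factor `y e`. -/
theorem weight_close {y : Sym2 V → ℝ} (hy : ∀ e ∈ E, 0 < y e) {q : ℝ} (hq : 1 ≤ q)
    (a : Config E) (e : {e : Sym2 V // e ∈ E}) (ha : a e = true) :
    weight E y q a ≤ y e.1 * weight E y q (upd a e false) := by
  unfold weight
  rw [← Finset.mul_prod_erase Finset.univ _ (Finset.mem_univ e),
    ← Finset.mul_prod_erase Finset.univ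
      (fun f : {e : Sym2 V // e ∈ E} => if upd a e false f then y f.1 else 1)
      (Finset.mem_univ e)]
  have hprod : (∏ f ∈ Finset.univ.erase e,
        (if upd a e false f then y f.1 else 1)) =
      ∏ f ∈ Finset.univ.erase e, (if a f then y f.1 else 1) := by
    apply Finset.prod_congr rfl
    intro f hf
    rw [upd_ne _ _ (Finset.ne_of_mem_erase hf)]
  rw [hprod]
  simp only [ha, if_true, upd_self, Bool.false_eq_true, if_false, one_mul]
  have hk : kappa a ≤ kappa (upd a e false) := kappa_anti (upd_false_le a e)
  have h1 := pow_le_pow_right₀ hq hk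
  have h2 : 0 ≤ y e.1 * ∏ f ∈ Finset.univ.erase e, (if a f then y f.1 else 1) := by
    apply mul_nonneg (hy _ e.2).le
    apply Finset.prod_nonneg
    intro e _
    split_ifs <;> first | exact (hy _ e.2).le | exact zero_le_one
  calc _ ≤ _ := mul_le_mul_of_nonneg_right h1 h2
    _ = _ := by ring

/-- Total mass of an event. -/
def mass (w : Config E → ℝ) (P : Config E → Prop) : ℝ := ∑ ω, if P ω then w ω else 0

theorem mass_congr (w : Config E → ℝ) {P Q : Config E → Prop} (h : ∀ ω, P ω ↔ Q ω) :
    mass w P = mass w Q := by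
  have : P = Q := funext fun ω => propext (h ω)
  rw [this]

theorem mass_nonneg {w : Config E → ℝ} (hw : ∀ ω, 0 ≤ w ω) (P : Config E → Prop) :
    0 ≤ mass w P := by
  apply Finset.sum_nonneg
  intro ω _
  split_ifs
  · exact hw ω
  · exact le_rfl

theorem mass_split (w : Config E → ℝ) (P Q : Config E → Prop) :
    mass w P = mass w (fun ω => P ω ∧ Q ω) + mass w (fun ω => P ω ∧ ¬ Q ω) := by
  unfold mass
  rw [← Finset.sum_add_distrib]
  apply Finset.sum_congr rfl
  intro ω _
  by_cases h1 : P ω <;> by_cases h2 : Q ω <;> simp [h1, h2]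

theorem mass_fkg {w : Config E → ℝ} (hw : ∀ ω, 0 ≤ w ω)
    (hs : ∀ a b, w a * w b ≤ w (a ⊓ b) * w (a ⊔ b))
    {P Q : Config E → Prop} (hP : ∀ a b, a ≤ b → P a → P b) (hQ : ∀ a b, a ≤ b → Q a → Q b) :
    mass w P * mass w Q ≤ mass w (fun _ => True) * mass w (fun ω => P ω ∧ Q ω) := by
  have mono : ∀ {P : Config E → Prop}, (∀ a b, a ≤ b → P a → P b) →
      Monotone (fun a => if P a then (1 : ℝ) else 0) := by
    intro P hP a b hab
    dsimp only
    by_cases h : P a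
    · simp [h, hP a b hab h]
    · simp only [h, if_false]
      split_ifs <;> norm_num
  have h := fkg (μ := w) (f := fun a => if P a then (1 : ℝ) else 0)
    (g := fun a => if Q a then (1 : ℝ) else 0) hw
    (fun a => by dsimp only; split_ifs <;> norm_num)
    (fun a => by dsimp only; split_ifs <;> norm_num) (mono hP) (mono hQ) hs
  simp only [mass]
  have h' : ∀ {a b c d a' b' c' d' : ℝ}, a' * b' ≤ c' * d' → a = a' → b = b' → c = c' →
      d = d' → a * b ≤ c * d := by
    rintro a b c d _ _ _ _ h rfl rfl rfl rfl
    exact h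
  refine h' h ?_ ?_ ?_ ?_
  · apply Finset.sum_congr rfl; intro a _; simp
  · apply Finset.sum_congr rfl; intro a _; simp
  · apply Finset.sum_congr rfl; intro a _; simp
  · apply Finset.sum_congr rfl
    intro a _
    by_cases h1 : P a <;> by_cases h2 : Q a <;> simp [h1, h2]

theorem mass_filter (w : Config E → ℝ) (P : Config E → Prop) :
    mass w P = ∑ a ∈ Finset.univ.filter P, w a := by
  unfold mass
  rw [Finset.sum_filter]

theorem mem_filt (P : Config E → Prop) (a : Config E) : a ∈ Finset.univ.filter P ↔ P a := by
  simp

theorem mass_open_le {w : Config E → ℝ} (e : {e : Sym2 V // e ∈ E}) {s : ℝ}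
    (hc : ∀ a : Config E, a e = true → w a ≤ s * w (upd a e false)) :
    mass w (Op e) ≤ s * mass w (fun ω => ¬ Op e ω) := by
  rw [mass_filter, mass_filter, Finset.mul_sum]
  calc _ ≤ ∑ a ∈ Finset.univ.filter (Op e), s * w (upd a e false) := by
        apply Finset.sum_le_sum
        intro a ha
        exact hc a ((mem_filt _ _).1 ha)
    _ = _ := by
        refine Finset.sum_bij' (fun a _ => upd a e false)
          (fun a _ => upd a e true) ?_ ?_ ?_ ?_ ?_
        · intro a ha
          refine (mem_filt _ _).2 ?_
          unfold Op
          rw [upd_self]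
          exact Bool.false_ne_true
        · intro a ha
          refine (mem_filt _ _).2 ?_
          exact upd_self _ _ _
        · intro a ha
          exact upd_upd _ _ _ _ ((mem_filt _ _).1 ha)
        · intro a ha
          exact upd_upd _ _ _ _ (Bool.eq_false_iff.2 ((mem_filt _ _).1 ha))
        · intro a ha; rfl

theorem key {w : Config E → ℝ} (hw : ∀ ω, 0 ≤ w ω)
    (hs : ∀ a b, w a * w b ≤ w (a ⊓ b) * w (a ⊔ b)) (e : {e : Sym2 V // e ∈ E}) {s : ℝ}
    (hs0 : 0 < s)
    (hc : ∀ a : Config E, a e = true → w a ≤ s * w (upd a e false))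
    {A : Set (Config E)} (hA : Increasing A) :
    mass w (fun ω => ω ∈ A ∧ Pivotal A e ω) * mass w (fun _ => True) ≤
      (1 + s) * (mass w (fun ω => ω ∈ A ∧ Op e ω) * mass w (fun _ => True)
        - mass w (Op e) * mass w (fun ω => ω ∈ A)) := by
  have hpiv : ∀ ω : Config E, ω ∈ A → (Pivotal A e ω ↔ ¬ upd ω e false ∈ A) := by
    intro ω h
    have := hA _ _ (le_upd_true ω e) h
    rw [pivotal_iff]
    tauto
  have hpo : ∀ ω : Config E, ω ∈ A → ¬ upd ω e false ∈ A → Op e ω := by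
    intro ω h h1
    by_contra h2
    have h3 : ω e = false := Bool.eq_false_iff.2 h2
    rw [upd_eq _ _ _ h3] at h1
    exact h1 h
  set B : Config E → Prop := fun ω => upd ω e false ∈ A with hB
  have hBA : ∀ ω, B ω → ω ∈ A := fun ω h => hA _ _ (upd_false_le ω e) h
  have e1 : mass w (fun ω => ω ∈ A) =
      mass w B + mass w (fun ω => ω ∈ A ∧ Pivotal A e ω) := by
    rw [mass_split w _ B]
    congr 1
    · exact mass_congr w fun ω => ⟨fun h => h.2, fun h => ⟨hBA ω h, h⟩⟩
    · exact mass_congr w fun ω => and_congr_right fun h => (hpiv ω h).symm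
  have e2 : mass w (fun ω => ω ∈ A ∧ Op e ω) =
      mass w (fun ω => B ω ∧ Op e ω) + mass w (fun ω => ω ∈ A ∧ Pivotal A e ω) := by
    rw [mass_split w _ B]
    congr 1
    · exact mass_congr w fun ω => ⟨fun h => ⟨h.2, h.1.2⟩, fun h => ⟨⟨hBA ω h.1, h.2⟩, h.1⟩⟩
    · exact mass_congr w fun ω => ⟨fun h => ⟨h.1.1, (hpiv ω h.1.1).2 h.2⟩,
        fun h => ⟨⟨h.1, hpo ω h.1 ((hpiv ω h.1).1 h.2)⟩, (hpiv ω h.1).1 h.2⟩⟩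
  have e3 : mass w (fun _ => True) = mass w (Op e) +
      mass w (fun ω => ¬ Op e ω) := by
    rw [mass_split w _ (Op e)]
    simp only [true_and]
  have hf := mass_fkg hw hs (P := B) (Q := Op e)
    (fun a b hab h => hA _ _ (upd_mono hab e false) h)
    (by
      intro a b hab h
      have h1 := hab e
      unfold Op at h ⊢
      rw [h] at h1
      exact top_le_iff.1 h1)
  have ho := mass_open_le e hc
  have hp := mass_nonneg hw (fun ω => ω ∈ A ∧ Pivotal A e ω)
  rw [e2, e1]
  generalize mass w (fun ω => ω ∈ A ∧ Pivotal A e ω) = p at *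
  generalize mass w (fun ω => B ω ∧ Op e ω) = b1 at *
  generalize mass w B = b at *
  generalize mass w (Op e) = o at *
  generalize mass w (fun ω => ¬ Op e ω) = c at *
  generalize mass w (fun _ => True) = z at *
  have h1 := mul_le_mul_of_nonneg_left hf (show 0 ≤ 1 + s by linarith)
  have h2 := mul_le_mul_of_nonneg_left ho hp
  subst e3
  nlinarith

theorem weight_mod (E' : Finset (Sym2 V)) (x : Sym2 V → ℝ) (q : ℝ) (ω : Config E) :
    ∃ (C : ℝ) (n : ℕ), (∀ t, weight E (modWeights E' x t) q ω = C * t ^ n) ∧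
      (n : ℝ) = ∑ e : {e : Sym2 V // e ∈ E}, if e.1 ∈ E' ∧ Op e ω then 1 else 0 := by
  refine ⟨q ^ kappa ω * ∏ e : {e : Sym2 V // e ∈ E},
      (if ω e then (if e.1 ∈ E' then 1 else x e.1) else 1),
    (Finset.univ.filter (fun e : {e : Sym2 V // e ∈ E} => e.1 ∈ E' ∧ Op e ω)).card, ?_, ?_⟩
  · intro t
    rw [← Finset.prod_const, Finset.prod_filter, mul_assoc, ← Finset.prod_mul_distrib]
    unfold weight
    congr 1
    apply Finset.prod_congr rfl
    intro e _
    have hop : Op e ω ↔ ω e = true := Iff.rfl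
    simp only [modWeights, hop]
    by_cases h1 : ω e = true <;> by_cases h2 : e.1 ∈ E' <;> simp [h1, h2]
  · rw [Finset.card_filter]
    push_cast
    rfl

theorem weight_deriv (E' : Finset (Sym2 V)) (x : Sym2 V → ℝ) (q : ℝ) (ω : Config E) {s : ℝ}
    (hs : 0 < s) :
    HasDerivAt (fun t => weight E (modWeights E' x t) q ω)
      ((1 / s) * ∑ e : {e : Sym2 V // e ∈ E},
        if e.1 ∈ E' ∧ Op e ω then weight E (modWeights E' x s) q ω else 0) s := by
  obtain ⟨C, n, h1, h2⟩ := weight_mod E' x q ω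
  have h3 : (∑ e : {e : Sym2 V // e ∈ E},
      if e.1 ∈ E' ∧ Op e ω then weight E (modWeights E' x s) q ω else 0) = n * (C * s ^ n) := by
    rw [h2, Finset.sum_mul, h1]
    apply Finset.sum_congr rfl
    intro e _
    split_ifs <;> simp
  rw [h3]
  simp only [h1]
  suffices h4 : 1 / s * (n * (C * s ^ n)) = C * (n * s ^ (n - 1)) by
    rw [h4]
    exact (hasDerivAt_pow n s).const_mul C
  rcases n with _ | n
  · simp
  · field_simp
    simp [pow_succ]
    ring

theorem mass_deriv (E' : Finset (Sym2 V)) (x : Sym2 V → ℝ) (q : ℝ) (P : Config E → Prop) {s : ℝ}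
    (hs : 0 < s) :
    HasDerivAt (fun t => mass (weight E (modWeights E' x t) q) P)
      ((1 / s) * ∑ e : {e : Sym2 V // e ∈ E},
        if e.1 ∈ E' then mass (weight E (modWeights E' x s) q) (fun ω => P ω ∧ Op e ω) else 0)
      s := by
  have h := HasDerivAt.fun_sum (u := Finset.univ.filter P)
    (fun ω _ => weight_deriv E' x q ω hs)
  simp only [mass_filter (P := P)]
  suffices h4 : ((1 / s) * ∑ e : {e : Sym2 V // e ∈ E}, if e.1 ∈ E' then
        mass (weight E (modWeights E' x s) q) (fun ω => P ω ∧ Op e ω) else 0) =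
      ∑ ω ∈ Finset.univ.filter P, (1 / s) * ∑ e : {e : Sym2 V // e ∈ E},
        if e.1 ∈ E' ∧ Op e ω then weight E (modWeights E' x s) q ω else 0 by
    rw [h4]
    exact h
  rw [← Finset.mul_sum, Finset.sum_comm]
  congr 1
  apply Finset.sum_congr rfl
  intro e _
  rw [Finset.sum_filter]
  by_cases he : e.1 ∈ E'
  · simp only [he, if_true, true_and, mass]
    apply Finset.sum_congr rfl
    intro ω _
    by_cases h1 : P ω <;> by_cases h2 : Op e ω <;> simp [h1, h2]
  · simp [he]

theorem sum_prob (y : Sym2 V → ℝ) (q : ℝ) (P : Config E → Prop)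
    [DecidablePred P] : (∑ ω : Config E, if P ω then prob E y q ω else 0) =
      mass (weight E y q) P / mass (weight E y q) (fun _ => True) := by
  have hZ : mass (weight E y q) (fun _ => True) = Z E y q := by simp [mass, Z]
  rw [hZ]
  unfold mass
  rw [Finset.sum_div]
  apply Finset.sum_congr rfl
  intro ω _
  by_cases h : P ω <;> simp [h, prob]

theorem mass_pos {w : Config E → ℝ} (hw : ∀ ω, 0 < w ω) {P : Config E → Prop} {a : Config E}
    (ha : P a) : 0 < mass w P := by
  rw [mass_filter]
  exact Finset.sum_pos (fun ω _ => hw ω) ⟨a, Finset.mem_filter.2 ⟨Finset.mem_univ _, ha⟩⟩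

end

end RandomCluster

open RandomCluster in
theorem stmt3 {V : Type*} [Fintype V] [DecidableEq V] (E E' : Finset (Sym2 V)) (hE' : E' ⊆ E)
    (x : Sym2 V → ℝ) (hx : ∀ e ∈ E, 0 < x e) (q : ℝ) (hq : 1 ≤ q)
    (A : Set (Config E)) (hA : A.Nonempty) (hAinc : Increasing A) :
    ∀ s : ℝ, 0 < s →
      DifferentiableAt ℝ (fun t => Real.log (probOf E E' x q t A)) s ∧
      deriv (fun t => Real.log (probOf E E' x q t A)) s ≥
        (1 / (s * (1 + s))) *
          ∑ e : {e : Sym2 V // e ∈ E}, (if e.1 ∈ E' then condPiv E E' x q s A e else 0) := by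
  intro s hs
  obtain ⟨a, ha⟩ := hA
  have hy : ∀ e ∈ E, 0 < modWeights E' x s e := by
    intro e he
    unfold modWeights
    split_ifs
    · exact hs
    · exact hx e he
  have hw := weight_pos hy hq
  have hWpos : 0 < mass (weight E (modWeights E' x s) q) (fun ω => ω ∈ A) := mass_pos hw ha
  have hZpos : 0 < mass (weight E (modWeights E' x s) q) (fun _ => True) :=
    mass_pos hw (a := a) trivial
  have hfun : (fun t => Real.log (probOf E E' x q t A)) = fun t => Real.log
      (mass (weight E (modWeights E' x t) q) (fun ω => ω ∈ A) /
        mass (weight E (modWeights E' x t) q) (fun _ => True)) := by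
    funext t
    congr 1
    exact sum_prob _ _ _
  have hd := ((mass_deriv E' x q (fun ω : Config E => ω ∈ A) hs).fun_div
    (mass_deriv E' x q (fun _ : Config E => True) hs) hZpos.ne').log
    (div_pos hWpos hZpos).ne'
  rw [hfun]
  refine ⟨hd.differentiableAt, ?_⟩
  rw [hd.deriv, ge_iff_le]
  have hc : ∀ e, condPiv E E' x q s A e =
      mass (weight E (modWeights E' x s) q) (fun ω => ω ∈ A ∧ Pivotal A e ω) /
        mass (weight E (modWeights E' x s) q) (fun ω => ω ∈ A) := by
    intro e
    unfold condPiv probOf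
    rw [sum_prob _ _ (fun ω => ω ∈ A ∧ Pivotal A e ω), sum_prob _ _ (fun ω => ω ∈ A)]
    field_simp
  have hkey := fun (e : {e : Sym2 V // e ∈ E}) (he : e.1 ∈ E') =>
    key (fun ω => (hw ω).le) (weight_supermod hy hq) e hs
      (fun a ha => by
        have h := weight_close hy hq a e ha
        have h1 : modWeights E' x s e.1 = s := by simp [modWeights, he]
        rwa [h1] at h) hAinc
  simp only [hc]
  generalize hWdef : mass (weight E (modWeights E' x s) q) (fun ω => ω ∈ A) = W at *
  generalize hZdef : mass (weight E (modWeights E' x s) q) (fun _ => True) = Z at *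
  simp only [true_and]
  have hterm : ∑ e : {e : Sym2 V // e ∈ E}, (if e.1 ∈ E' then
        mass (weight E (modWeights E' x s) q) (fun ω => ω ∈ A ∧ Pivotal A e ω) / W else 0) ≤
      ∑ e : {e : Sym2 V // e ∈ E}, (1 + s) * ((if e.1 ∈ E' then
        mass (weight E (modWeights E' x s) q) (fun ω => ω ∈ A ∧ Op e ω) else 0) / W -
        (if e.1 ∈ E' then mass (weight E (modWeights E' x s) q) (Op e) else 0) / Z) := by
    apply Finset.sum_le_sum
    intro e _
    by_cases he : e.1 ∈ E'
    · simp only [he, if_true]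
      have h := hkey e he
      rw [div_sub_div _ _ hWpos.ne' hZpos.ne', ← mul_div_assoc, div_le_div_iff₀ hWpos (by positivity)]
      nlinarith
    · simp [he]
  rw [← Finset.mul_sum, Finset.sum_sub_distrib, ← Finset.sum_div, ← Finset.sum_div] at hterm
  calc _ ≤ 1 / (s * (1 + s)) * _ := mul_le_mul_of_nonneg_left hterm (by positivity)
    _ = _ := by
      have : (fun e : {e : Sym2 V // e ∈ E} => mass (weight E (modWeights E' x s) q) (fun ω => Op e ω))
        = fun e => mass (weight E (modWeights E' x s) q) (Op e) := rfl
      field_simp
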